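/- arXiv:2505.24603 — 2 statements merged into one kernel-verified Lean document; each statement's English description precedes it below -/
import Mathlib

section
/- Let X ∈ ℝ^{n×d} be a matrix every row of which has Euclidean norm at most C_X > 0, and suppose λ_min(XᵀX) ≥ λ̄_min for some λ̄_min ≥ 0. Let k ≥ 1, σ > 0, and set γ := (σ² + λ̄_min)/C_X². Assume γ > 5/2, and let X' be obtained from X by replacing exactly one row with the zero vector. Then for every α ∈ (1, 2γ/5), both D_α(M(X)‖M(X')) ≤ (k/(2γ²))·α and D_α(M(X')‖M(X)) ≤ (k/(2γ²))·α, where M denotes the Gaussian mixing mechanism with parameters k and σ; that is, the Gaussian mixing mechanism satisfies (k/(2γ²), 2γ/5)-tCDP. -/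
open MeasureTheory ProbabilityTheory Matrix

/-- Law of the Gaussian random matrix with i.i.d. standard Gaussian entries. -/
noncomputable def stdGaussMat (k n : ℕ) : Measure (Fin k → Fin n → ℝ) :=
  Measure.pi fun _ => Measure.pi fun _ => gaussianReal 0 1

/-- The Gaussian mixing mechanism `M(X) = S X + σ ξ` with `S, ξ` independent
matrices of i.i.d. standard Gaussian entries: this is the law of the output. -/
noncomputable def gaussMix {n d : ℕ} (k : ℕ) (σ : ℝ) (X : Matrix (Fin n) (Fin d) ℝ) :
    Measure (Fin k → Fin d → ℝ) :=
  Measure.map (fun p => fun i j => (∑ l, p.1 i l * X l j) + σ * p.2 i j)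
    ((stdGaussMat k n).prod (stdGaussMat k d))

/-- The `α`-Rényi divergence `D_α(P‖Q) = (α-1)⁻¹ log ∫ (dP/dQ)^α dQ`. -/
noncomputable def renyiDiv {Ω : Type*} [MeasurableSpace Ω] (α : ℝ) (P Q : Measure Ω) : ℝ :=
  (α - 1)⁻¹ * Real.log (∫ x, ((P.rnDeriv Q) x).toReal ^ α ∂Q)

/-- The privacy curve `φ(α; k, ζ)`. -/
noncomputable def phi (α k ζ : ℝ) : ℝ :=
  k * α / (2 * (α - 1)) * Real.log (1 - 1 / ζ)
    - k / (2 * (α - 1)) * Real.log (1 - α / ζ)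

/-- Minimal eigenvalue of a (Hermitian) real matrix. -/
noncomputable def lamMin {d : ℕ} (A : Matrix (Fin d) (Fin d) ℝ) : ℝ :=
  if h : A.IsHermitian then ⨅ i, h.eigenvalues i else 0

open scoped NNReal ENNReal

/-- Fourth-order Taylor bound for `log (1 - t)`. -/
theorem log_one_sub_le_taylor {t : ℝ} (h0 : 0 ≤ t) (h1 : t < 1) :
    Real.log (1 - t) ≤ -(t + t ^ 2 / 2 + t ^ 3 / 3 + t ^ 4 / 4) := by
  have hs := Real.hasSum_pow_div_log_of_abs_lt_one (x := t) (by rwa [abs_of_nonneg h0])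
  have := hs.summable.sum_le_tsum (Finset.range 4) (fun i _ => by positivity)
  rw [hs.tsum_eq] at this
  simp only [Finset.sum_range_succ, Finset.sum_range_zero] at this
  norm_num at this
  linarith

theorem mul_log_sub_log_le {α t : ℝ} (hα : 1 ≤ α) (ht : 0 ≤ t) (hαt : α * t ≤ 2 / 5) :
    α * Real.log (1 - t) - Real.log (1 - α * t) ≤ α * (α - 1) * t ^ 2 := by
  have key : AntitoneOn
      (fun a : ℝ => a * Real.log (1 - t) - Real.log (1 - a * t) - a * (a - 1) * t ^ 2)
      (Set.Icc 1 α) := by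
    have hpos : ∀ a ∈ Set.Icc 1 α, a * t ≤ 2 / 5 := fun a ha =>
      (mul_le_mul_of_nonneg_right ha.2 ht).trans hαt
    have hd : ∀ a ∈ Set.Icc 1 α, HasDerivAt
        (fun a : ℝ => a * Real.log (1 - t) - Real.log (1 - a * t) - a * (a - 1) * t ^ 2)
        (Real.log (1 - t) + t / (1 - a * t) - (2 * a - 1) * t ^ 2) a := by
      intro a ha
      have h1 : 1 - a * t ≠ 0 := by linarith [hpos a ha]
      have e1 := (hasDerivAt_id a).mul_const (Real.log (1 - t))
      have e2 := (((hasDerivAt_id a).mul_const t).const_sub 1).log h1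
      have e3 := ((hasDerivAt_id a).mul ((hasDerivAt_id a).sub_const 1)).mul_const (t ^ 2)
      convert! (e1.sub e2).sub e3 using 1
      simp only [id]
      ring
    refine antitoneOn_of_deriv_nonpos (convex_Icc _ _)
      (fun a ha => (hd a ha).continuousAt.continuousWithinAt)
      (fun a ha => (hd a (interior_subset ha)).differentiableAt.differentiableWithinAt) ?_
    intro a ha
    have ha := interior_subset ha
    rw [(hd a ha).deriv]
    have hs := hpos a ha
    set s := a * t with hsdef
    have hts : t ≤ s := by nlinarith [ha.1]
    have hl := log_one_sub_le_taylor ht (by linarith)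
    have hs0 : 0 ≤ s := ht.trans hts
    have hdiv : t / (1 - s) ≤ t * (1 + s * (3 / 2 + s / 3 + s ^ 2 / 4)) := by
      rw [div_le_iff₀ (by linarith), mul_assoc]
      refine le_mul_of_one_le_right ht ?_
      have h1 : 0 ≤ s * (2 / 5 - s) := mul_nonneg hs0 (sub_nonneg.2 hs)
      have h2 : 1 ≤ (1 - s) * (3 / 2 + s / 3 + s ^ 2 / 4) := by
        nlinarith [mul_nonneg h1 hs0]
      nlinarith [mul_le_mul_of_nonneg_left h2 hs0]
    have hmono : s ^ 2 / 3 + s ^ 3 / 4 - s / 2 ≤ t ^ 2 / 3 + t ^ 3 / 4 - t / 2 := by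
      have h3 : (s + t) / 3 + (s ^ 2 + s * t + t ^ 2) / 4 ≤ 1 / 2 := by nlinarith
      nlinarith [mul_nonneg (sub_nonneg.2 hts) (sub_nonneg.2 h3)]
    have hsq : (2 * a - 1) * t ^ 2 = 2 * s * t - t ^ 2 := by rw [hsdef]; ring
    nlinarith [mul_le_mul_of_nonneg_left hmono ht]
  have := key (Set.left_mem_Icc.2 hα) (Set.right_mem_Icc.2 hα) hα
  simp only [one_mul, sub_self, zero_mul] at this
  linarith

theorem neg_mul_log_sub_log_le {β t : ℝ} (hβ : 0 ≤ β) (ht : 0 ≤ t) (ht' : t ≤ 2 / 5) :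
    -(β * Real.log (1 - t)) - Real.log (1 + β * t) ≤ β * (β + 1) * t ^ 2 := by
  have h1 : -t - t ^ 2 ≤ Real.log (1 - t) := by
    have h := (abs_le.1 (Real.abs_log_sub_add_sum_range_le (x := t)
      (by rw [abs_of_nonneg ht]; linarith) 3)).1
    rw [abs_of_nonneg ht] at h
    have h3 : t ^ (3 + 1) / (1 - t) ≤ t ^ 2 * (4 / 15) := by
      rw [div_le_iff₀ (by linarith)]
      nlinarith [mul_nonneg (sq_nonneg t) (mul_nonneg ht (sub_nonneg.2 ht')),
        mul_nonneg (sq_nonneg t) (sub_nonneg.2 ht')]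
    simp only [Finset.sum_range_succ, Finset.sum_range_zero] at h
    norm_num at h
    norm_num at h3
    nlinarith [mul_nonneg (sq_nonneg t) (sub_nonneg.2 ht')]
  have h2 : β * t - (β * t) ^ 2 ≤ Real.log (1 + β * t) := by
    have := Real.one_sub_inv_le_log_of_pos (show 0 < 1 + β * t by positivity)
    refine le_trans ?_ this
    have : 0 ≤ β * t := by positivity
    rw [inv_eq_one_div, le_sub_comm, div_le_iff₀ (by positivity)]
    nlinarith [pow_nonneg this 3]
  nlinarith

theorem renyiDiv_self {Ω : Type*} [MeasurableSpace Ω] (α : ℝ) (P : Measure Ω)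
    [IsProbabilityMeasure P] : renyiDiv α P P = 0 := by
  have : ∫ x, ((P.rnDeriv P) x).toReal ^ α ∂P = ∫ _, (1 : ℝ) ∂P := by
    refine integral_congr_ae ?_
    filter_upwards [P.rnDeriv_self] with x hx
    simp [hx]
  simp [renyiDiv, this]

theorem renyiDiv_withDensity {Ω : Type*} [MeasurableSpace Ω] (α : ℝ) (Q : Measure Ω)
    [SigmaFinite Q] {g : Ω → ℝ} (hg : Measurable g) (hg0 : ∀ x, 0 ≤ g x) :
    renyiDiv α (Q.withDensity fun x => ENNReal.ofReal (g x)) Q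
      = (α - 1)⁻¹ * Real.log (∫ x, g x ^ α ∂Q) := by
  rw [renyiDiv]
  congr 2
  refine integral_congr_ae ?_
  filter_upwards [Q.rnDeriv_withDensity hg.ennreal_ofReal] with x hx
  rw [hx, ENNReal.toReal_ofReal (hg0 x)]

/-- Pushing forward along a map that admits a left inverse onto the coordinate carrying the
density transports the density. -/
theorem map_prod_withDensity {Z E F : Type*} [MeasurableSpace Z] [MeasurableSpace E]
    [MeasurableSpace F] (μ : Measure Z) [SigmaFinite μ] (κ : Measure E) [SigmaFinite κ]
    {g : Z → ℝ≥0∞} (hg : Measurable g) [SigmaFinite (μ.withDensity g)]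
    {Φ : Z × E → F} (hΦ : Measurable Φ)
    {ψ : F → Z} (hψ : Measurable ψ) (hψΦ : ∀ p, ψ (Φ p) = p.1) :
    ((μ.withDensity g).prod κ).map Φ = ((μ.prod κ).map Φ).withDensity (g ∘ ψ) := by
  rw [prod_withDensity_left hg]
  ext s hs
  rw [Measure.map_apply hΦ hs, withDensity_apply _ (hΦ hs), withDensity_apply _ hs,
    setLIntegral_map hs (hg.comp hψ) hΦ]
  simp [hψΦ]

theorem pi_withDensity_ofReal {ι Z : Type*} [Fintype ι] [MeasurableSpace Z] (μ : Measure Z)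
    [SigmaFinite μ] {g : Z → ℝ} (hg0 : ∀ z, 0 ≤ g z) (hgi : Integrable g μ) :
    (Measure.pi fun _ : ι => μ).withDensity (fun z => ENNReal.ofReal (∏ i, g (z i)))
      = Measure.pi fun _ : ι => μ.withDensity fun z => ENNReal.ofReal (g z) := by
  have := isFiniteMeasure_withDensity_ofReal hgi.2
  symm
  refine Measure.pi_eq fun s hs => ?_
  have hind : ∀ z : ι → Z, (Set.univ.pi s).indicator
      (fun z => ENNReal.ofReal (∏ i, g (z i))) z
        = ENNReal.ofReal (∏ i, (s i).indicator g (z i)) := by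
    intro z
    by_cases hz : z ∈ Set.univ.pi s
    · rw [Set.indicator_of_mem hz]
      congr 1
      exact Finset.prod_congr rfl fun i _ => (Set.indicator_of_mem (hz i trivial) _).symm
    · rw [Set.indicator_of_notMem hz]
      obtain ⟨i, hi⟩ : ∃ i, z i ∉ s i := by simpa [Set.mem_pi] using hz
      rw [Finset.prod_eq_zero (Finset.mem_univ i) (Set.indicator_of_notMem hi _),
        ENNReal.ofReal_zero]
  have hnn : ∀ i z, 0 ≤ (s i).indicator g z := fun i z => Set.indicator_nonneg (fun z _ => hg0 z) z
  have hint : ∀ i, Integrable ((s i).indicator g) μ := fun i => hgi.indicator (hs i)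
  rw [withDensity_apply _ (MeasurableSet.univ_pi hs),
    ← lintegral_indicator (MeasurableSet.univ_pi hs)]
  simp_rw [hind]
  rw [← ofReal_integral_eq_lintegral_ofReal (Integrable.fintype_prod hint)
    (ae_of_all _ fun z => Finset.prod_nonneg fun i _ => hnn i _),
    integral_fintype_prod_eq_prod (fun i => (s i).indicator g),
    ENNReal.ofReal_prod_of_nonneg fun i _ => integral_nonneg (hnn i)]
  refine Finset.prod_congr rfl fun i _ => ?_
  rw [withDensity_apply _ (hs i), integral_indicator (hs i),
    ofReal_integral_eq_lintegral_ofReal hgi.integrableOn (ae_of_all _ hg0)]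

/-- Density of `N(0, v₁)` with respect to `N(0, v₂)`. -/
noncomputable def gaussRatio (v₁ v₂ : ℝ≥0) (z : ℝ) : ℝ :=
  gaussianPDFReal 0 v₁ z / gaussianPDFReal 0 v₂ z

theorem measurable_gaussRatio (v₁ v₂ : ℝ≥0) : Measurable (gaussRatio v₁ v₂) :=
  (measurable_gaussianPDFReal 0 v₁).div (measurable_gaussianPDFReal 0 v₂)

theorem gaussRatio_nonneg (v₁ v₂ : ℝ≥0) (z : ℝ) : 0 ≤ gaussRatio v₁ v₂ z :=
  div_nonneg (gaussianPDFReal_nonneg _ _ _) (gaussianPDFReal_nonneg _ _ _)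

theorem gaussianReal_withDensity_gaussRatio {v₁ v₂ : ℝ≥0} (h₁ : v₁ ≠ 0) (h₂ : v₂ ≠ 0) :
    (gaussianReal 0 v₂).withDensity (fun z => ENNReal.ofReal (gaussRatio v₁ v₂ z))
      = gaussianReal 0 v₁ := by
  rw [gaussianReal_of_var_ne_zero _ h₂, gaussianReal_of_var_ne_zero _ h₁,
    ← withDensity_mul _ (measurable_gaussianPDF _ _) (measurable_gaussRatio _ _).ennreal_ofReal]
  congr 1
  ext z
  rw [Pi.mul_apply, gaussianPDF, gaussianPDF, ← ENNReal.ofReal_mul (gaussianPDFReal_nonneg _ _ _),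
    gaussRatio, mul_div_cancel₀ _ (gaussianPDFReal_pos 0 v₂ z h₂).ne']

theorem integrable_gaussRatio {v₁ v₂ : ℝ≥0} (h₁ : v₁ ≠ 0) (h₂ : v₂ ≠ 0) :
    Integrable (gaussRatio v₁ v₂) (gaussianReal 0 v₂) := by
  refine ⟨(measurable_gaussRatio _ _).aestronglyMeasurable, ?_⟩
  rw [hasFiniteIntegral_iff_ofReal (ae_of_all _ (gaussRatio_nonneg _ _)), ← setLIntegral_univ,
    ← withDensity_apply _ MeasurableSet.univ, gaussianReal_withDensity_gaussRatio h₁ h₂]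
  exact measure_lt_top _ _

theorem integral_gaussRatio_rpow {v₁ v₂ : ℝ≥0} (h₁ : v₁ ≠ 0) (h₂ : v₂ ≠ 0) (α : ℝ) :
    ∫ z, gaussRatio v₁ v₂ z ^ α ∂(gaussianReal 0 v₂)
      = √(v₂ / v₁ : ℝ) ^ α / √(α * (v₂ / v₁ : ℝ) + (1 - α)) := by
  have hv₁ : (0 : ℝ) < v₁ := by positivity
  have hv₂ : (0 : ℝ) < v₂ := by positivity
  have hpt : ∀ z : ℝ, gaussianPDFReal 0 v₂ z • gaussRatio v₁ v₂ z ^ α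
      = √(v₂ / v₁ : ℝ) ^ α * (√(2 * Real.pi * v₂))⁻¹
        * Real.exp (-((α * (v₂ / v₁ : ℝ) + (1 - α)) / (2 * v₂)) * z ^ 2) := by
    intro z
    have hr : gaussRatio v₁ v₂ z
        = √(v₂ / v₁ : ℝ) * Real.exp (-(1 / (2 * v₁) - 1 / (2 * v₂)) * z ^ 2) := by
      rw [gaussRatio, gaussianPDFReal, gaussianPDFReal, mul_div_mul_comm, ← Real.exp_sub,
        ← Real.sqrt_inv, ← Real.sqrt_inv, ← Real.sqrt_div' _ (by positivity)]
      congr 2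
      · field_simp
      · field_simp
        ring
    rw [hr, Real.mul_rpow (by positivity) (by positivity), ← Real.exp_mul, gaussianPDFReal,
      smul_eq_mul, mul_mul_mul_comm, ← Real.exp_add, mul_comm (√(2 * Real.pi * v₂))⁻¹]
    congr 2
    field_simp
    ring
  rw [integral_gaussianReal_eq_integral_smul h₂]
  simp_rw [hpt]
  rw [integral_const_mul, integral_gaussian, mul_assoc, div_eq_mul_inv _ (√(_ + _)),
    ← Real.sqrt_inv, ← Real.sqrt_inv, ← Real.sqrt_mul (by positivity)]
  congr 2
  field_simp

theorem renyiDiv_map_prod_pi_gaussianReal {k : ℕ} {E F : Type*} [MeasurableSpace E]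
    [MeasurableSpace F] (κ : Measure E) [IsProbabilityMeasure κ]
    {Φ : (Fin k → ℝ) × E → F} (hΦ : Measurable Φ)
    {ψ : F → Fin k → ℝ} (hψ : Measurable ψ) (hψΦ : ∀ p, ψ (Φ p) = p.1)
    {v₁ v₂ : ℝ≥0} (h₁ : v₁ ≠ 0) (h₂ : v₂ ≠ 0) (α : ℝ)
    (hpos : 0 < α * (v₂ / v₁ : ℝ) + (1 - α)) :
    renyiDiv α (((Measure.pi fun _ => gaussianReal 0 v₁).prod κ).map Φ)
        (((Measure.pi fun _ => gaussianReal 0 v₂).prod κ).map Φ)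
      = (α - 1)⁻¹ * (k / 2 * (α * Real.log (v₂ / v₁ : ℝ)
          - Real.log (α * (v₂ / v₁ : ℝ) + (1 - α)))) := by
  set Q := ((Measure.pi fun _ : Fin k => gaussianReal 0 v₂).prod κ).map Φ with hQ
  have : IsProbabilityMeasure Q := Measure.isProbabilityMeasure_map hΦ.aemeasurable
  have hm : Measurable fun z : Fin k → ℝ => ∏ i, gaussRatio v₁ v₂ (z i) :=
    Finset.measurable_fun_prod _ fun i _ => (measurable_gaussRatio _ _).comp (measurable_pi_apply i)
  have hpi := pi_withDensity_ofReal (ι := Fin k) (gaussianReal 0 v₂)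
    (gaussRatio_nonneg v₁ v₂) (integrable_gaussRatio h₁ h₂)
  rw [gaussianReal_withDensity_gaussRatio h₁ h₂] at hpi
  have : SigmaFinite ((Measure.pi fun _ : Fin k => gaussianReal 0 v₂).withDensity
      fun z => ENNReal.ofReal (∏ i, gaussRatio v₁ v₂ (z i))) := by rw [hpi]; infer_instance
  have hnn : ∀ z : Fin k → ℝ, 0 ≤ ∏ i, gaussRatio v₁ v₂ (z i) := fun z =>
    Finset.prod_nonneg fun i _ => gaussRatio_nonneg _ _ _
  rw [← hpi, map_prod_withDensity _ _ hm.ennreal_ofReal hΦ hψ hψΦ, ← hQ]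
  have := renyiDiv_withDensity α Q (hm.comp hψ) (fun x => hnn (ψ x))
  simp only [Function.comp_def] at this ⊢
  rw [this]
  congr 1
  have hint : ∫ x, (∏ i, gaussRatio v₁ v₂ (ψ x i)) ^ α ∂Q
      = (√(v₂ / v₁ : ℝ) ^ α / √(α * (v₂ / v₁ : ℝ) + (1 - α))) ^ k := by
    rw [hQ, integral_map hΦ.aemeasurable
      (by exact ((hm.comp hψ).pow_const α).aestronglyMeasurable)]
    simp_rw [hψΦ, ← Real.finsetProd_rpow _ _ (fun i _ => gaussRatio_nonneg _ _ _)]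
    rw [integral_fun_fst (fun z : Fin k → ℝ => ∏ i, gaussRatio v₁ v₂ (z i) ^ α),
      integral_fintype_prod_eq_pow (fun z => gaussRatio v₁ v₂ z ^ α),
      integral_gaussRatio_rpow h₁ h₂ α]
    simp
  have hv : (0 : ℝ) < v₂ / v₁ := by positivity
  rw [hint, Real.log_pow, Real.log_div (by positivity) (by positivity),
    Real.log_rpow (by positivity), Real.log_sqrt hv.le, Real.log_sqrt hpos.le]
  ring

theorem ext_of_integral_cexp_sum {k d : ℕ} {μ ν : Measure (Fin k → Fin d → ℝ)}
    [IsFiniteMeasure μ] [IsFiniteMeasure ν]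
    (h : ∀ θ : Fin k → Fin d → ℝ,
      ∫ y, Complex.exp ((∑ i, θ i ⬝ᵥ y i : ℝ) * Complex.I) ∂μ
        = ∫ y, Complex.exp ((∑ i, θ i ⬝ᵥ y i : ℝ) * Complex.I) ∂ν) : μ = ν := by
  refine Measure.ext_of_charFunDual (funext fun L => ?_)
  have hL : ∀ y, L y = ∑ i, (fun j => L (Pi.single i (Pi.single j 1))) ⬝ᵥ y i := by
    intro y
    have hy : y = ∑ i, ∑ j, y i j • (Pi.single i (Pi.single j 1) : Fin k → Fin d → ℝ) := by
      ext a b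
      simp [Finset.sum_apply, Pi.single_apply, apply_ite, ite_apply]
    conv_lhs => rw [hy]
    simp only [map_sum, map_smul, dotProduct, smul_eq_mul]
    exact Finset.sum_congr rfl fun i _ => Finset.sum_congr rfl fun j _ => mul_comm _ _
  have hexp : (fun y => Complex.exp (L y * Complex.I)) = fun y => Complex.exp
      ((∑ i, (fun j => L (Pi.single i (Pi.single j 1))) ⬝ᵥ y i : ℝ) * Complex.I) :=
    funext fun y => by rw [hL y]
  rw [charFunDual_apply, charFunDual_apply, hexp]
  exact h _

theorem integral_cexp_pi_gaussianReal {m : ℕ} (v : ℝ≥0) (b : Fin m → ℝ) :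
    ∫ z, Complex.exp ((b ⬝ᵥ z : ℝ) * Complex.I) ∂(Measure.pi fun _ : Fin m => gaussianReal 0 v)
      = Complex.exp (-(v * (b ⬝ᵥ b) / 2 : ℝ)) := by
  have hexp : ∀ z : Fin m → ℝ, Complex.exp ((b ⬝ᵥ z : ℝ) * Complex.I)
      = ∏ i, Complex.exp (b i * z i * Complex.I) := by
    intro z
    rw [← Complex.exp_sum, dotProduct]
    push_cast
    rw [Finset.sum_mul]
  simp_rw [hexp]
  rw [integral_fintype_prod_eq_prod (fun i (x : ℝ) => Complex.exp (b i * x * Complex.I))]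
  simp_rw [← charFun_apply_real, charFun_gaussianReal, ← Complex.exp_sum]
  congr 1
  simp only [dotProduct, Finset.mul_sum, Finset.sum_div]
  push_cast
  rw [← Finset.sum_neg_distrib]
  refine Finset.sum_congr rfl fun i _ => ?_
  ring

theorem integral_cexp_stdGaussMat {k n : ℕ} (a : Fin k → Fin n → ℝ) :
    ∫ y, Complex.exp ((∑ i, a i ⬝ᵥ y i : ℝ) * Complex.I) ∂(stdGaussMat k n)
      = Complex.exp (-((∑ i, a i ⬝ᵥ a i) / 2 : ℝ)) := by
  have hexp : ∀ y : Fin k → Fin n → ℝ, Complex.exp ((∑ i, a i ⬝ᵥ y i : ℝ) * Complex.I)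
      = ∏ i, Complex.exp ((a i ⬝ᵥ y i : ℝ) * Complex.I) := by
    intro y
    rw [← Complex.exp_sum, Complex.ofReal_sum, Finset.sum_mul]
  simp_rw [hexp]
  rw [stdGaussMat, integral_fintype_prod_eq_prod
    (fun i (x : Fin n → ℝ) => Complex.exp ((a i ⬝ᵥ x : ℝ) * Complex.I))]
  simp_rw [integral_cexp_pi_gaussianReal, ← Complex.exp_sum]
  congr 1
  simp [Finset.sum_div]

/-- The quadratic form of the covariance matrix `XᵀX + σ²I`. -/
def mixForm {n d : ℕ} (σ : ℝ) (X : Matrix (Fin n) (Fin d) ℝ) (θ : Fin d → ℝ) : ℝ :=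
  X *ᵥ θ ⬝ᵥ X *ᵥ θ + σ ^ 2 * (θ ⬝ᵥ θ)

instance (k n : ℕ) : IsProbabilityMeasure (stdGaussMat k n) := by
  unfold stdGaussMat; infer_instance

theorem measurable_gaussMix_map {n d : ℕ} (k : ℕ) (σ : ℝ) (X : Matrix (Fin n) (Fin d) ℝ) :
    Measurable (fun (p : (Fin k → Fin n → ℝ) × (Fin k → Fin d → ℝ)) =>
      fun i j => (∑ l, p.1 i l * X l j) + σ * p.2 i j) := by
  fun_prop

instance {n d : ℕ} (k : ℕ) (σ : ℝ) (X : Matrix (Fin n) (Fin d) ℝ) :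
    IsProbabilityMeasure (gaussMix k σ X) :=
  Measure.isProbabilityMeasure_map (measurable_gaussMix_map k σ X).aemeasurable

theorem measurable_cexp_sum_dotProduct {k d : ℕ} (θ : Fin k → Fin d → ℝ) :
    Measurable fun y : Fin k → Fin d → ℝ =>
      Complex.exp ((∑ i, θ i ⬝ᵥ y i : ℝ) * Complex.I) := by
  unfold dotProduct
  fun_prop

theorem integral_cexp_gaussMix {n d k : ℕ} (σ : ℝ) (X : Matrix (Fin n) (Fin d) ℝ)
    (θ : Fin k → Fin d → ℝ) :
    ∫ y, Complex.exp ((∑ i, θ i ⬝ᵥ y i : ℝ) * Complex.I) ∂(gaussMix k σ X)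
      = Complex.exp (-((∑ i, mixForm σ X (θ i)) / 2 : ℝ)) := by
  rw [gaussMix, integral_map (measurable_gaussMix_map k σ X).aemeasurable
    (measurable_cexp_sum_dotProduct θ).aestronglyMeasurable]
  have hexp : ∀ p : (Fin k → Fin n → ℝ) × (Fin k → Fin d → ℝ),
      Complex.exp ((∑ i, θ i ⬝ᵥ (fun j => (∑ l, p.1 i l * X l j) + σ * p.2 i j) : ℝ) * Complex.I)
        = Complex.exp ((∑ i, X *ᵥ θ i ⬝ᵥ p.1 i : ℝ) * Complex.I)
          * Complex.exp ((∑ i, (σ • θ i) ⬝ᵥ p.2 i : ℝ) * Complex.I) := by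
    intro p
    rw [← Complex.exp_add, ← add_mul, ← Complex.ofReal_add, ← Finset.sum_add_distrib]
    congr 3
    refine Finset.sum_congr rfl fun i _ => ?_
    have : (fun j => (∑ l, p.1 i l * X l j) + σ * p.2 i j) = p.1 i ᵥ* X + σ • p.2 i := rfl
    rw [this, dotProduct_add, dotProduct_comm, ← dotProduct_mulVec, dotProduct_comm]
    simp
  simp_rw [hexp]
  rw [integral_prod_mul (fun y : Fin k → Fin n → ℝ =>
      Complex.exp ((∑ i, X *ᵥ θ i ⬝ᵥ y i : ℝ) * Complex.I))
    (fun y : Fin k → Fin d → ℝ => Complex.exp ((∑ i, (σ • θ i) ⬝ᵥ y i : ℝ) * Complex.I)),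
    integral_cexp_stdGaussMat, integral_cexp_stdGaussMat, ← Complex.exp_add]
  congr 1
  rw [← Complex.ofReal_neg, ← Complex.ofReal_neg, ← Complex.ofReal_neg, ← Complex.ofReal_add]
  congr 1
  simp only [mixForm, Finset.sum_add_distrib, smul_dotProduct, dotProduct_smul, smul_eq_mul,
    ← mul_assoc, ← sq]
  ring

/-- Replaces the component of each row of `y` along `x` (as read off by `w`) by `z`. -/
noncomputable def replaceComponent {k d : ℕ} (x w : Fin d → ℝ) (t : ℝ)
    (p : (Fin k → ℝ) × (Fin k → Fin d → ℝ)) : Fin k → Fin d → ℝ :=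
  fun i => p.2 i + ((p.1 i - w ⬝ᵥ p.2 i) / t) • x

theorem measurable_replaceComponent {k d : ℕ} (x w : Fin d → ℝ) (t : ℝ) :
    Measurable (replaceComponent (k := k) x w t) := by
  unfold replaceComponent dotProduct
  fun_prop

theorem dotProduct_replaceComponent {k d : ℕ} {x w : Fin d → ℝ} {t : ℝ} (ht : t ≠ 0)
    (hwx : w ⬝ᵥ x = t) (p : (Fin k → ℝ) × (Fin k → Fin d → ℝ)) :
    (fun i => w ⬝ᵥ replaceComponent x w t p i) = p.1 := by
  ext i
  simp only [replaceComponent, dotProduct_add, dotProduct_smul, hwx, smul_eq_mul]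
  field_simp
  ring

theorem mixForm_sub_smul {n d : ℕ} (σ : ℝ) (X : Matrix (Fin n) (Fin d) ℝ) {x w : Fin d → ℝ}
    (hw : Xᵀ *ᵥ (X *ᵥ w) + σ ^ 2 • w = x) (θ : Fin d → ℝ) (c : ℝ) :
    mixForm σ X (θ - c • w) = mixForm σ X θ - 2 * c * (θ ⬝ᵥ x) + c ^ 2 * (w ⬝ᵥ x) := by
  have hpol : ∀ u : Fin d → ℝ, u ⬝ᵥ x = X *ᵥ u ⬝ᵥ X *ᵥ w + σ ^ 2 * (u ⬝ᵥ w) := by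
    intro u
    rw [← hw, dotProduct_add, dotProduct_mulVec, vecMul_transpose, dotProduct_smul, smul_eq_mul]
  rw [hpol, hpol]
  simp only [mixForm, mulVec_sub, mulVec_smul, sub_dotProduct, dotProduct_sub, smul_dotProduct,
    dotProduct_smul, smul_eq_mul, dotProduct_comm w θ, dotProduct_comm (X *ᵥ w) (X *ᵥ θ)]
  ring

theorem gaussMix_eq_map_replaceComponent {n d k : ℕ} (σ : ℝ) (X Y : Matrix (Fin n) (Fin d) ℝ)
    {x w : Fin d → ℝ} {t : ℝ} (ht : t ≠ 0) (hwx : w ⬝ᵥ x = t)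
    (hw : Xᵀ *ᵥ (X *ᵥ w) + σ ^ 2 • w = x) (v : ℝ≥0)
    (hY : ∀ θ, mixForm σ Y θ = mixForm σ X θ - (θ ⬝ᵥ x) ^ 2 / t + v * (θ ⬝ᵥ x / t) ^ 2) :
    gaussMix k σ Y = ((Measure.pi fun _ => gaussianReal 0 v).prod (gaussMix k σ X)).map
      (replaceComponent x w t) := by
  have : IsProbabilityMeasure (((Measure.pi fun _ : Fin k => gaussianReal 0 v).prod
      (gaussMix k σ X)).map (replaceComponent x w t)) :=
    Measure.isProbabilityMeasure_map (measurable_replaceComponent x w t).aemeasurable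
  refine ext_of_integral_cexp_sum fun θ => ?_
  rw [integral_cexp_gaussMix, integral_map (measurable_replaceComponent x w t).aemeasurable
    (measurable_cexp_sum_dotProduct θ).aestronglyMeasurable]
  have hexp : ∀ p : (Fin k → ℝ) × (Fin k → Fin d → ℝ),
      Complex.exp ((∑ i, θ i ⬝ᵥ replaceComponent x w t p i : ℝ) * Complex.I)
        = Complex.exp (((fun i => θ i ⬝ᵥ x / t) ⬝ᵥ p.1 : ℝ) * Complex.I)
          * Complex.exp ((∑ i, (θ i - (θ i ⬝ᵥ x / t) • w) ⬝ᵥ p.2 i : ℝ) * Complex.I) := by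
    intro p
    rw [← Complex.exp_add, ← add_mul, ← Complex.ofReal_add, dotProduct, ← Finset.sum_add_distrib]
    congr 3
    refine Finset.sum_congr rfl fun i _ => ?_
    simp only [replaceComponent, dotProduct_add, dotProduct_smul, sub_dotProduct, smul_dotProduct,
      smul_eq_mul]
    ring
  simp_rw [hexp]
  rw [integral_prod_mul (fun z : Fin k → ℝ =>
      Complex.exp (((fun i => θ i ⬝ᵥ x / t) ⬝ᵥ z : ℝ) * Complex.I))
    (fun y : Fin k → Fin d → ℝ =>
      Complex.exp ((∑ i, (θ i - (θ i ⬝ᵥ x / t) • w) ⬝ᵥ y i : ℝ) * Complex.I)),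
    integral_cexp_pi_gaussianReal, integral_cexp_gaussMix, ← Complex.exp_add]
  congr 1
  rw [← Complex.ofReal_neg, ← Complex.ofReal_neg, ← Complex.ofReal_neg, ← Complex.ofReal_add]
  congr 1
  have hsum : ∑ i, mixForm σ Y (θ i)
      = v * ((fun i => θ i ⬝ᵥ x / t) ⬝ᵥ fun i => θ i ⬝ᵥ x / t)
        + ∑ i, mixForm σ X (θ i - (θ i ⬝ᵥ x / t) • w) := by
    rw [dotProduct, Finset.mul_sum, ← Finset.sum_add_distrib]
    refine Finset.sum_congr rfl fun i _ => ?_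
    rw [hY, mixForm_sub_smul σ X hw, hwx]
    field_simp
    ring
  rw [hsum]
  ring

theorem mixForm_updateRow_zero {n d : ℕ} (σ : ℝ) (X : Matrix (Fin n) (Fin d) ℝ) (i : Fin n)
    (θ : Fin d → ℝ) : mixForm σ (X.updateRow i 0) θ = mixForm σ X θ - (θ ⬝ᵥ X i) ^ 2 := by
  have h : (X.updateRow i 0) *ᵥ θ = Function.update (X *ᵥ θ) i 0 := by
    ext l
    by_cases hl : l = i
    · subst hl; simp [mulVec]
    · simp [mulVec, hl]
  have hs : Function.update (X *ᵥ θ) i 0 ⬝ᵥ Function.update (X *ᵥ θ) i 0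
      = X *ᵥ θ ⬝ᵥ X *ᵥ θ - (θ ⬝ᵥ X i) ^ 2 := by
    rw [eq_sub_iff_add_eq]
    simp only [dotProduct]
    rw [← Finset.add_sum_erase _ _ (Finset.mem_univ i),
      ← Finset.add_sum_erase (a := i) _ (fun l => (X *ᵥ θ) l * (X *ᵥ θ) l) (Finset.mem_univ i)]
    have : ∀ l ∈ Finset.univ.erase i,
        Function.update (X *ᵥ θ) i 0 l * Function.update (X *ᵥ θ) i 0 l = (X *ᵥ θ) l * (X *ᵥ θ) l := fun l hl => by
      rw [Function.update_of_ne (Finset.ne_of_mem_erase hl)]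
    rw [Finset.sum_congr rfl this, Function.update_self]
    simp only [mulVec, dotProduct, mul_comm (θ _)]
    ring
  rw [mixForm, h, hs, mixForm]
  ring

open scoped MatrixOrder in
theorem lamMin_mul_dotProduct_le {d : ℕ} {A : Matrix (Fin d) (Fin d) ℝ} (hA : A.IsHermitian)
    (w : Fin d → ℝ) : lamMin A * (w ⬝ᵥ w) ≤ w ⬝ᵥ A *ᵥ w := by
  have hle : algebraMap ℝ (Matrix (Fin d) (Fin d) ℝ) (lamMin A) ≤ A := by
    rw [algebraMap_le_iff_le_spectrum (ha := hA.isSelfAdjoint)]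
    intro s hs
    rw [hA.spectrum_real_eq_range_eigenvalues] at hs
    obtain ⟨j, rfl⟩ := hs
    rw [lamMin, dif_pos hA]
    exact ciInf_le (Set.finite_range _).bddBelow j
  have := (Matrix.le_iff.1 hle).dotProduct_mulVec_nonneg w
  rw [star_trivial, sub_mulVec, dotProduct_sub, Algebra.algebraMap_eq_smul_one, smul_mulVec,
    one_mulVec, dotProduct_smul, smul_eq_mul] at this
  linarith

theorem exists_mulVec_eq {n d : ℕ} {σ : ℝ} (hσ : 0 < σ) (X : Matrix (Fin n) (Fin d) ℝ)
    (x : Fin d → ℝ) : ∃ w, Xᵀ *ᵥ (X *ᵥ w) + σ ^ 2 • w = x := by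
  have hpd : (Xᵀ * X + σ ^ 2 • (1 : Matrix (Fin d) (Fin d) ℝ)).PosDef :=
    (PosDef.one.smul (by positivity)).posSemidef_add (posSemidef_conjTranspose_mul_self X)
  refine ⟨(Xᵀ * X + σ ^ 2 • (1 : Matrix (Fin d) (Fin d) ℝ))⁻¹ *ᵥ x, ?_⟩
  set w := (Xᵀ * X + σ ^ 2 • (1 : Matrix (Fin d) (Fin d) ℝ))⁻¹ *ᵥ x with hw
  have : (Xᵀ * X + σ ^ 2 • (1 : Matrix (Fin d) (Fin d) ℝ)) *ᵥ w = x := by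
    rw [hw, mulVec_mulVec, mul_nonsing_inv _ ((isUnit_iff_isUnit_det _).1 hpd.isUnit), one_mulVec]
  rw [← this, add_mulVec, smul_mulVec, one_mulVec, mulVec_mulVec]

theorem dotProduct_mul_le_one {n d : ℕ} {X : Matrix (Fin n) (Fin d) ℝ} {CX lamBar σ : ℝ}
    (hCX : 0 < CX) (hlamBar : 0 ≤ lamBar) (hlam : lamBar ≤ lamMin (Xᵀ * X)) (hσ : 0 < σ)
    {x w : Fin d → ℝ} (hx : x ⬝ᵥ x ≤ CX ^ 2) (hx0 : x ≠ 0)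
    (hw : Xᵀ *ᵥ (X *ᵥ w) + σ ^ 2 • w = x) :
    0 < w ⬝ᵥ x ∧ (σ ^ 2 + lamBar) / CX ^ 2 * (w ⬝ᵥ x) ≤ 1 := by
  have hw0 : 0 < w ⬝ᵥ w := by
    refine (Finset.sum_nonneg fun j _ => mul_self_nonneg (w j)).lt_of_ne' fun h => hx0 ?_
    rw [← hw, dotProduct_self_eq_zero.1 h]
    simp
  have hlow : (σ ^ 2 + lamBar) * (w ⬝ᵥ w) ≤ w ⬝ᵥ x := by
    have h := lamMin_mul_dotProduct_le (isHermitian_conjTranspose_mul_self X) w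
    rw [conjTranspose_eq_transpose_of_trivial, ← mulVec_mulVec] at h
    have h' := mul_le_mul_of_nonneg_right hlam hw0.le
    rw [← hw, dotProduct_add, dotProduct_smul, smul_eq_mul]
    linarith
  have hpos : 0 < w ⬝ᵥ x := lt_of_lt_of_le (by positivity) hlow
  have hcs : (w ⬝ᵥ x) ^ 2 ≤ (w ⬝ᵥ w) * (x ⬝ᵥ x) := by
    simpa only [dotProduct, sq] using Finset.sum_mul_sq_le_sq_mul_sq Finset.univ w x
  refine ⟨hpos, ?_⟩
  rw [div_mul_eq_mul_div, div_le_one (by positivity)]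
  refine le_of_mul_le_mul_right ?_ hpos
  calc (σ ^ 2 + lamBar) * (w ⬝ᵥ x) * (w ⬝ᵥ x)
      = (σ ^ 2 + lamBar) * (w ⬝ᵥ x) ^ 2 := by ring
    _ ≤ (σ ^ 2 + lamBar) * ((w ⬝ᵥ w) * CX ^ 2) := by
        gcongr
        exact hcs.trans (mul_le_mul_of_nonneg_left hx hw0.le)
    _ = CX ^ 2 * ((σ ^ 2 + lamBar) * (w ⬝ᵥ w)) := by ring
    _ ≤ CX ^ 2 * (w ⬝ᵥ x) := by gcongr

theorem inv_mul_half_mul_le {α γ t k L : ℝ} (hα : 1 < α) (hγ : 0 < γ) (ht : 0 ≤ t)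
    (hγt : γ * t ≤ 1) (hk : 0 ≤ k) (hL : L ≤ α * (α - 1) * t ^ 2) :
    (α - 1)⁻¹ * (k / 2 * L) ≤ k / (2 * γ ^ 2) * α := by
  have hα' : 0 < α - 1 := sub_pos.2 hα
  have ht2 : t ^ 2 ≤ 1 / γ ^ 2 := by
    rw [le_div_iff₀ (by positivity), ← mul_pow, mul_comm]
    exact pow_le_one₀ (by positivity) hγt
  calc (α - 1)⁻¹ * (k / 2 * L) ≤ (α - 1)⁻¹ * (k / 2 * (α * (α - 1) * t ^ 2)) := by gcongr
    _ = k / 2 * α * t ^ 2 := by field_simp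
    _ ≤ k / 2 * α * (1 / γ ^ 2) := by gcongr
    _ = k / (2 * γ ^ 2) * α := by field_simp

/-- the Gaussian mixing mechanism satisfies `(k/(2γ²), 2γ/5)`-tCDP. -/
theorem gaussMix_tCDP {n d : ℕ} (X : Matrix (Fin n) (Fin d) ℝ)
    (CX lamBar σ γ : ℝ) (k : ℕ) (hk : 1 ≤ k)
    (hCX : 0 < CX)
    (hrow : ∀ i, Real.sqrt (∑ j, X i j ^ 2) ≤ CX)
    (hlamBar : 0 ≤ lamBar)
    (hlam : lamBar ≤ lamMin (Xᵀ * X))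
    (hσ : 0 < σ)
    (hγ : γ = (σ ^ 2 + lamBar) / CX ^ 2)
    (hγ1 : 5 / 2 < γ)
    (i : Fin n) (X' : Matrix (Fin n) (Fin d) ℝ) (hX' : X' = X.updateRow i 0)
    (α : ℝ) (hα : α ∈ Set.Ioo 1 (2 * γ / 5)) :
    renyiDiv α (gaussMix k σ X) (gaussMix k σ X') ≤ (k / (2 * γ ^ 2)) * α ∧
      renyiDiv α (gaussMix k σ X') (gaussMix k σ X) ≤ (k / (2 * γ ^ 2)) * α := by
  obtain ⟨hα1, hα2⟩ := hα
  have hγ0 : 0 < γ := by linarith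
  by_cases hx0 : X i = 0
  · have : X' = X := by rw [hX', ← hx0, updateRow_eq_self]
    rw [this, renyiDiv_self]
    have : 0 ≤ (k / (2 * γ ^ 2)) * α := by positivity
    exact ⟨this, this⟩
  have hx : X i ⬝ᵥ X i ≤ CX ^ 2 := by
    have := (Real.sqrt_le_left hCX.le).1 (hrow i)
    simpa only [dotProduct, sq] using this
  obtain ⟨w, hw⟩ := exists_mulVec_eq hσ X (X i)
  obtain ⟨ht, hγt⟩ := dotProduct_mul_le_one hCX hlamBar hlam hσ hx hx0 hw
  rw [← hγ] at hγt
  obtain ⟨t, hwx⟩ : ∃ t, w ⬝ᵥ X i = t := ⟨_, rfl⟩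
  rw [hwx] at ht hγt
  have hαt : α * t ≤ 2 / 5 := by nlinarith
  have ht5 : t ≤ 2 / 5 := by nlinarith
  have ht1 : 0 < 1 - t := by linarith
  lift t to NNReal using ht.le
  have hv : (0 : ℝ) ≤ t - t ^ 2 := by nlinarith
  obtain ⟨v, hvt⟩ : ∃ v : NNReal, (v : ℝ) = t - t ^ 2 := ⟨⟨_, hv⟩, rfl⟩
  have ht0 : t ≠ 0 := by rintro rfl; simp at ht
  have hv0 : v ≠ 0 := by
    rintro rfl
    simp only [NNReal.coe_zero] at hvt
    nlinarith
  have eX : gaussMix k σ X = _ := gaussMix_eq_map_replaceComponent σ X X ht.ne' hwx hw t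
    (fun θ => by field_simp; ring)
  have eX' : gaussMix k σ X' = _ := gaussMix_eq_map_replaceComponent σ X X' ht.ne' hwx hw v
    (fun θ => by rw [hX', mixForm_updateRow_zero, hvt]; field_simp; ring)
  have hψ : Measurable fun (y : Fin k → Fin d → ℝ) i => w ⬝ᵥ y i := by
    unfold dotProduct
    fun_prop
  have hΦ := measurable_replaceComponent (k := k) (X i) w t
  have hψΦ := dotProduct_replaceComponent (k := k) ht.ne' hwx
  have r₁ : (v / t : ℝ) = 1 - t := by rw [hvt]; field_simp
  have r₂ : (t / v : ℝ) = (1 - (t : ℝ))⁻¹ := by rw [← r₁, inv_div]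
  have c₁ : α * (1 - (t : ℝ)) + (1 - α) = 1 - α * t := by ring
  have c₂ : α * (1 - (t : ℝ))⁻¹ + (1 - α) = (1 + (α - 1) * t) / (1 - t) := by
    field_simp
    ring
  have hnum : 0 < 1 + (α - 1) * (t : ℝ) := by
    have := mul_nonneg (sub_nonneg.2 hα1.le) ht.le
    linarith
  have fwd := renyiDiv_map_prod_pi_gaussianReal (gaussMix k σ X) hΦ hψ hψΦ ht0 hv0 α
    (by rw [r₁, c₁]; linarith)
  have bwd := renyiDiv_map_prod_pi_gaussianReal (gaussMix k σ X) hΦ hψ hψΦ hv0 ht0 α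
    (by rw [r₂, c₂]; positivity)
  rw [← eX, ← eX'] at fwd bwd
  rw [fwd, bwd, r₁, r₂, c₁, c₂]
  refine ⟨inv_mul_half_mul_le hα1 hγ0 ht.le hγt k.cast_nonneg (mul_log_sub_log_le hα1.le ht.le hαt),
    inv_mul_half_mul_le hα1 hγ0 ht.le hγt k.cast_nonneg ?_⟩
  rw [Real.log_inv, Real.log_div hnum.ne' ht1.ne']
  linarith [neg_mul_log_sub_log_le (sub_nonneg.2 hα1.le) ht.le ht5]
end

section
/- Let X ∈ ℝ^{n×d}, σ > 0, k ≥ 1, and let X' be obtained from X by replacing its i-th row x_i with the zero vector. Set Σ := XᵀX + σ²I_d and t := x_iᵀ Σ⁻¹ x_i. Then for every α > 1 with αt < 1, the α-Rényi divergence between the outputs of the Gaussian mixing mechanism satisfies the exact identity D_α(M(X)‖M(X')) = (k/(2(α−1))) · log( (1 − t)^α / (1 − αt) ). -/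
open MeasureTheory ProbabilityTheory Matrix

open scoped ENNReal NNReal

/-- The integral of a product of functions of the separate coordinates with respect to a product of
probability measures is the product of the integrals. -/
lemma lintegral_pi_prod_eq_prod {ι : Type*} [Fintype ι] {E : ι → Type*}
    {mE : ∀ j, MeasurableSpace (E j)} (μ : ∀ j, Measure (E j)) [∀ j, IsProbabilityMeasure (μ j)]
    (f : ∀ j, E j → ℝ≥0∞) (hf : ∀ j, Measurable (f j)) :
    ∫⁻ z, ∏ j, f j (z j) ∂(Measure.pi μ) = ∏ j, ∫⁻ x, f j x ∂(μ j) := by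
  refine (lintegral_prod_eq_prod_lintegral_of_indepFun Finset.univ
    (fun j (z : ∀ j, E j) => f j (z j)) (iIndepFun_pi fun j => (hf j).aemeasurable)
    (fun j => (hf j).comp (measurable_pi_apply j))).trans ?_
  exact Finset.prod_congr rfl fun j _ =>
    (measurePreserving_eval μ j).lintegral_comp (hf j)

/-- A product of probability measures with densities has the product density. -/
lemma pi_withDensity_eq {ι : Type*} [Fintype ι] {E : ι → Type*}
    {mE : ∀ j, MeasurableSpace (E j)} (μ : ∀ j, Measure (E j)) [∀ j, IsProbabilityMeasure (μ j)]
    (f : ∀ j, E j → ℝ≥0∞) (hf : ∀ j, Measurable (f j))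
    [∀ j, SigmaFinite ((μ j).withDensity (f j))] :
    Measure.pi (fun j => (μ j).withDensity (f j))
      = (Measure.pi μ).withDensity (fun z => ∏ j, f j (z j)) := by
  classical
  refine Measure.pi_eq fun s hs => ?_
  rw [withDensity_apply _ (MeasurableSet.univ_pi hs),
    ← lintegral_indicator (MeasurableSet.univ_pi hs)]
  have h : (Set.univ.pi s).indicator (fun z => ∏ j, f j (z j))
      = fun z => ∏ j, (s j).indicator (f j) (z j) := by
    funext z
    by_cases hz : z ∈ Set.univ.pi s
    · rw [Set.indicator_of_mem hz]
      exact Finset.prod_congr rfl fun j _ =>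
        (Set.indicator_of_mem (hz j (Set.mem_univ j)) _).symm
    · rw [Set.indicator_of_notMem hz]
      obtain ⟨j, hj⟩ : ∃ j, z j ∉ s j := by simpa [Set.mem_pi] using hz
      exact (Finset.prod_eq_zero (Finset.mem_univ j) (Set.indicator_of_notMem hj _)).symm
  rw [h, lintegral_pi_prod_eq_prod μ _ fun j => (hf j).indicator (hs j)]
  exact Finset.prod_congr rfl fun j _ => by
    rw [lintegral_indicator (hs j), withDensity_apply _ (hs j)]

/-- Overwriting one coordinate of a product-distributed vector by an independent copy of that
coordinate does not change the law. -/
lemma map_update_pi_prod {ι : Type*} [Fintype ι] [DecidableEq ι] {E : ι → Type*}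
    {mE : ∀ j, MeasurableSpace (E j)} (μ : ∀ j, Measure (E j)) [∀ j, IsProbabilityMeasure (μ j)]
    (i : ι) :
    ((Measure.pi μ).prod (μ i)).map (fun p => Function.update p.1 i p.2) = Measure.pi μ := by
  symm
  refine Measure.pi_eq fun s hs => ?_
  rw [Measure.map_apply measurable_update' (MeasurableSet.univ_pi hs)]
  have h : (fun p : (∀ j, E j) × E i => Function.update p.1 i p.2) ⁻¹' Set.univ.pi s
      = (Set.univ.pi (Function.update s i Set.univ)) ×ˢ s i := by
    ext p
    simp only [Set.mem_preimage, Set.mem_pi, Set.mem_univ, true_imp_iff, Set.mem_prod]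
    constructor
    · intro hp
      refine ⟨fun j => ?_, by simpa using hp i⟩
      by_cases hj : j = i
      · subst hj; simp
      · simpa [Function.update_of_ne hj] using hp j
    · rintro ⟨hp, hi⟩ j
      by_cases hj : j = i
      · subst hj; simpa using hi
      · simpa [Function.update_of_ne hj] using hp j
  rw [h, Measure.prod_prod, Measure.pi_pi, ← Finset.prod_erase_mul _ _ (Finset.mem_univ i),
    ← Finset.prod_erase_mul _ _ (Finset.mem_univ i)]
  simp only [Function.update_self, measure_univ, mul_one]
  congr 1
  exact Finset.prod_congr rfl fun j hj => by
    rw [Function.update_of_ne (Finset.ne_of_mem_erase hj)]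

/-- Translating the standard Gaussian on `ℝ` by `a` gives the density `exp (a x - a² / 2)`. -/
lemma gaussianReal_map_add_const_eq_withDensity (a : ℝ) :
    (gaussianReal 0 1).map (fun x => x + a)
      = (gaussianReal 0 1).withDensity
          (fun x => ENNReal.ofReal (Real.exp (a * x - a ^ 2 / 2))) := by
  rw [gaussianReal_map_add_const, gaussianReal_of_var_ne_zero _ one_ne_zero,
    gaussianReal_of_var_ne_zero _ one_ne_zero,
    ← withDensity_mul _ (measurable_gaussianPDF _ _) (by fun_prop)]
  congr 1
  funext x
  simp only [gaussianPDF, Pi.mul_apply, gaussianPDFReal]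
  rw [← ENNReal.ofReal_mul (by positivity), mul_assoc (_)⁻¹, ← Real.exp_add]
  congr 3
  simp only [NNReal.coe_one]
  ring

/-- The Cameron–Martin formula for the standard Gaussian measure on `ι → ℝ`. -/
lemma pi_gaussianReal_map_add_const {ι : Type*} [Fintype ι] (a : ι → ℝ) :
    (Measure.pi fun _ : ι => gaussianReal 0 1).map (fun z => z + a)
      = (Measure.pi fun _ : ι => gaussianReal 0 1).withDensity
          (fun z => ENNReal.ofReal (Real.exp (a ⬝ᵥ z - a ⬝ᵥ a / 2))) := by
  have hs (j : ι) : SigmaFinite ((gaussianReal 0 1).withDensity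
      (fun x => ENNReal.ofReal (Real.exp (a j * x - a j ^ 2 / 2)))) := by
    rw [← gaussianReal_map_add_const_eq_withDensity, gaussianReal_map_add_const]
    infer_instance
  have hs' (j : ι) : SigmaFinite ((gaussianReal 0 1).map (fun x => x + a j)) := by
    rw [gaussianReal_map_add_const]
    infer_instance
  have h := Measure.pi_map_pi (μ := fun _ : ι => gaussianReal 0 1) (f := fun j x => x + a j)
    (fun j => by fun_prop)
  simp only [gaussianReal_map_add_const_eq_withDensity] at h
  rw [pi_withDensity_eq _ _ (fun j => by fun_prop)] at h
  refine h.trans ?_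
  congr 1
  funext z
  rw [← ENNReal.ofReal_prod_of_nonneg (fun j _ => (Real.exp_pos _).le), ← Real.exp_sum]
  congr 2
  simp only [dotProduct, Finset.sum_sub_distrib, Finset.sum_div, sq]

/-- A linear functional of a standard Gaussian vector is a centered Gaussian variable whose variance
is the squared Euclidean norm of the functional. -/
lemma pi_gaussianReal_map_dotProduct {ι : Type*} [Fintype ι] (a : ι → ℝ) :
    (Measure.pi fun _ : ι => gaussianReal 0 1).map (fun z => a ⬝ᵥ z)
      = gaussianReal 0 (a ⬝ᵥ a).toNNReal := by
  have hm : Measurable fun z : ι → ℝ => a ⬝ᵥ z := by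
    unfold dotProduct; fun_prop
  have : IsProbabilityMeasure ((Measure.pi fun _ : ι => gaussianReal 0 1).map (fun z => a ⬝ᵥ z)) :=
    Measure.isProbabilityMeasure_map hm.aemeasurable
  refine Measure.ext_of_charFun ?_
  funext u
  rw [charFun_apply_real, integral_map hm.aemeasurable (by fun_prop), charFun_gaussianReal]
  have h (z : ι → ℝ) : Complex.exp (u * (a ⬝ᵥ z : ℝ) * Complex.I)
      = ∏ j, Complex.exp ((u * a j : ℝ) * z j * Complex.I) := by
    rw [← Complex.exp_sum]
    congr 1
    simp only [dotProduct, Complex.ofReal_sum, Finset.mul_sum, Finset.sum_mul]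
    refine Finset.sum_congr rfl fun j _ => ?_
    push_cast
    ring
  simp only [h]
  rw [integral_fintype_prod_eq_prod (μ := fun _ : ι => gaussianReal 0 1)
    (f := fun j (x : ℝ) => Complex.exp ((u * a j : ℝ) * x * Complex.I))]
  simp only [← charFun_apply_real, charFun_gaussianReal]
  have ha : 0 ≤ a ⬝ᵥ a := Finset.sum_nonneg fun j _ => mul_self_nonneg (a j)
  rw [← Complex.exp_sum, Real.coe_toNNReal _ ha]
  congr 1
  simp only [dotProduct, Complex.ofReal_sum, Finset.sum_mul, Finset.sum_div]
  simp only [Complex.ofReal_zero, mul_zero, zero_mul, zero_sub, ← Finset.sum_neg_distrib]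
  refine Finset.sum_congr rfl fun j _ => ?_
  push_cast
  ring

/-- The Gaussian integral of `exp (c x - s x² / 2)`. -/
lemma lintegral_exp_linear_sub_sq_gaussianReal (c : ℝ) {s : ℝ} (hs : 0 ≤ s) :
    ∫⁻ g, ENNReal.ofReal (Real.exp (g * c - g ^ 2 * s / 2)) ∂(gaussianReal 0 1)
      = ENNReal.ofReal (√(1 / (1 + s)) * Real.exp (c ^ 2 / (2 * (1 + s)))) := by
  have hs1 : 0 < 1 + s := by linarith
  set v : ℝ≥0 := (1 / (1 + s)).toNNReal with hv
  have hvc : (v : ℝ) = 1 / (1 + s) := Real.coe_toNNReal _ (by positivity)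
  have hv0 : v ≠ 0 := by
    rw [← NNReal.coe_ne_zero, hvc]; positivity
  rw [gaussianReal_of_var_ne_zero _ one_ne_zero,
    lintegral_withDensity_eq_lintegral_mul _ (measurable_gaussianPDF _ _) (by fun_prop)]
  have h (g : ℝ) : (gaussianPDF 0 1 * fun g => ENNReal.ofReal (Real.exp (g * c - g ^ 2 * s / 2))) g
      = ENNReal.ofReal (√(1 / (1 + s)) * Real.exp (c ^ 2 / (2 * (1 + s))))
        * gaussianPDF (c / (1 + s)) v g := by
    simp only [gaussianPDF, Pi.mul_apply, gaussianPDFReal, hvc]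
    rw [← ENNReal.ofReal_mul (by positivity), ← ENNReal.ofReal_mul (by positivity),
      mul_assoc, ← Real.exp_add]
    congr 1
    rw [Real.sqrt_mul (by positivity) (1 / (1 + s))]
    have h1 : 0 < √(1 / (1 + s)) := by positivity
    rw [mul_inv, show ∀ p q r w : ℝ, p * q * (r * p⁻¹ * w) = (p * p⁻¹) * r * (q * w) by
      intros; ring, mul_inv_cancel₀ h1.ne', ← Real.exp_add]
    simp only [NNReal.coe_one, mul_one, one_mul]
    congr 2
    field_simp
    ring
  simp only [h]
  rw [lintegral_const_mul _ (measurable_gaussianPDF _ _), lintegral_gaussianPDF_eq_one _ hv0,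
    mul_one]

/-- The exponential moment of the square of a centered Gaussian variable. -/
lemma integral_exp_sq_gaussianReal (v : ℝ≥0) {β : ℝ} (hβ : β * v < 1) :
    ∫ u, Real.exp (β * u ^ 2 / 2) ∂(gaussianReal 0 v) = √(1 / (1 - β * v)) := by
  by_cases hv : v = 0
  · subst hv; simp [gaussianReal_zero_var]
  have hv0 : (0 : ℝ) < v := NNReal.coe_pos.2 (pos_iff_ne_zero.2 hv)
  have hβ' : 0 < 1 - β * v := by linarith
  rw [integral_gaussianReal_eq_integral_smul hv]
  have h (u : ℝ) : gaussianPDFReal 0 v u • Real.exp (β * u ^ 2 / 2)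
      = (√(2 * Real.pi * v))⁻¹ * Real.exp (-((1 - β * v) / (2 * v)) * u ^ 2) := by
    rw [gaussianPDFReal, smul_eq_mul, mul_assoc, ← Real.exp_add]
    congr 2
    field_simp
    ring
  simp only [h]
  rw [integral_const_mul, integral_gaussian, ← Real.sqrt_inv, ← Real.sqrt_mul (by positivity)]
  congr 1
  field_simp

/-- The law of the Gaussian row vector `zᵀ W`, where `z` has i.i.d. standard Gaussian entries. -/
noncomputable def gaussRow {ι : Type*} [Fintype ι] {d : ℕ} (W : Matrix ι (Fin d) ℝ) :
    Measure (Fin d → ℝ) :=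
  (Measure.pi fun _ : ι => gaussianReal 0 1).map (fun z => z ᵥ* W)

lemma measurable_vecMul {ι κ : Type*} [Fintype ι] (W : Matrix ι κ ℝ) :
    Measurable fun z : ι → ℝ => z ᵥ* W := by
  unfold vecMul dotProduct
  fun_prop

lemma measurable_dotProduct {κ : Type*} [Fintype κ] (b : κ → ℝ) :
    Measurable fun y : κ → ℝ => b ⬝ᵥ y := by
  unfold dotProduct
  fun_prop

instance {ι : Type*} [Fintype ι] {d : ℕ} (W : Matrix ι (Fin d) ℝ) :
    IsProbabilityMeasure (gaussRow W) :=
  Measure.isProbabilityMeasure_map (measurable_vecMul W).aemeasurable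

lemma dotProduct_vecMul_eq {ι κ : Type*} [Fintype ι] [Fintype κ] (W : Matrix ι κ ℝ)
    (b : κ → ℝ) (z : ι → ℝ) : b ⬝ᵥ (z ᵥ* W) = (W *ᵥ b) ⬝ᵥ z := by
  rw [dotProduct_comm, ← dotProduct_mulVec, dotProduct_comm]

lemma mulVec_dotProduct_self {ι κ : Type*} [Fintype ι] [Fintype κ] (W : Matrix ι κ ℝ)
    (b : κ → ℝ) : (W *ᵥ b) ⬝ᵥ (W *ᵥ b) = b ⬝ᵥ ((Wᵀ * W) *ᵥ b) := by
  rw [← dotProduct_vecMul_eq, ← mulVec_mulVec, mulVec_transpose]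

/-- The law of a linear functional of a Gaussian row vector. -/
lemma gaussRow_map_dotProduct {ι : Type*} [Fintype ι] {d : ℕ} (W : Matrix ι (Fin d) ℝ)
    (b : Fin d → ℝ) :
    (gaussRow W).map (fun y => b ⬝ᵥ y) = gaussianReal 0 (b ⬝ᵥ ((Wᵀ * W) *ᵥ b)).toNNReal := by
  rw [gaussRow, Measure.map_map (measurable_dotProduct b) (measurable_vecMul W),
    ← mulVec_dotProduct_self, ← pi_gaussianReal_map_dotProduct]
  congr 1
  funext z
  exact dotProduct_vecMul_eq W b z

/-- The Cameron–Martin formula for a Gaussian row vector. -/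
lemma lintegral_gaussRow_add {ι : Type*} [Fintype ι] {d : ℕ} (W : Matrix ι (Fin d) ℝ)
    (b : Fin d → ℝ) (g : ℝ) {φ : (Fin d → ℝ) → ℝ≥0∞} (hφ : Measurable φ) :
    ∫⁻ y, φ (y + g • ((Wᵀ * W) *ᵥ b)) ∂(gaussRow W)
      = ∫⁻ y, ENNReal.ofReal (Real.exp (g * (b ⬝ᵥ y) - g ^ 2 * (b ⬝ᵥ ((Wᵀ * W) *ᵥ b)) / 2)) * φ y
          ∂(gaussRow W) := by
  have hb := measurable_dotProduct b
  have hW := measurable_vecMul W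
  have h (z : ι → ℝ) : z ᵥ* W + g • ((Wᵀ * W) *ᵥ b) = (z + g • (W *ᵥ b)) ᵥ* W := by
    rw [add_vecMul, smul_vecMul, ← mulVec_mulVec, mulVec_transpose]
  rw [gaussRow, lintegral_map (by fun_prop) hW, lintegral_map (by fun_prop) hW]
  simp only [h]
  rw [← lintegral_map (f := fun z => φ (z ᵥ* W)) (g := fun z => z + g • (W *ᵥ b)) (by fun_prop)
    (by fun_prop), pi_gaussianReal_map_add_const, lintegral_withDensity_eq_lintegral_mul _ _
    (by fun_prop)]
  · refine lintegral_congr fun z => ?_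
    simp only [Pi.mul_apply, smul_dotProduct, dotProduct_smul, smul_eq_mul,
      mulVec_dotProduct_self, dotProduct_vecMul_eq]
    congr 4
    ring
  · have := measurable_dotProduct (g • (W *ᵥ b))
    fun_prop

/-- Adding an independent Gaussian multiple of the vector `WᵀW b` to a Gaussian row vector with
covariance `WᵀW` changes its law by an explicit density. -/
lemma gaussRow_prod_map_add {ι : Type*} [Fintype ι] {d : ℕ} (W : Matrix ι (Fin d) ℝ)
    (b : Fin d → ℝ) {s : ℝ} (hs : s = b ⬝ᵥ ((Wᵀ * W) *ᵥ b)) :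
    ((gaussRow W).prod (gaussianReal 0 1)).map (fun p => p.1 + p.2 • ((Wᵀ * W) *ᵥ b))
      = (gaussRow W).withDensity (fun y =>
          ENNReal.ofReal (√(1 / (1 + s)) * Real.exp ((b ⬝ᵥ y) ^ 2 / (2 * (1 + s))))) := by
  have hs0 : 0 ≤ s := by
    rw [hs, ← mulVec_dotProduct_self]
    exact Finset.sum_nonneg fun j _ => mul_self_nonneg _
  have hb := measurable_dotProduct b
  refine Measure.ext_of_lintegral _ fun φ hφ => ?_
  rw [lintegral_map hφ (by fun_prop), lintegral_prod_symm' _ (by fun_prop),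
    lintegral_withDensity_eq_lintegral_mul _ (by fun_prop) hφ]
  simp only [lintegral_gaussRow_add W b _ hφ, ← hs]
  rw [lintegral_lintegral_swap (by fun_prop)]
  refine lintegral_congr fun y => ?_
  rw [lintegral_mul_const _ (by fun_prop), lintegral_exp_linear_sub_sq_gaussianReal _ hs0]
  rfl

/-- The contribution of one row of `W` to a Gaussian row vector is independent of the rest. -/
lemma gaussRow_eq_prod_map {ι : Type*} [Fintype ι] [DecidableEq ι] {d : ℕ}
    (W : Matrix ι (Fin d) ℝ) (i : ι) :
    gaussRow W = ((gaussRow (W.updateRow i 0)).prod (gaussianReal 0 1)).map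
      (fun p => p.1 + p.2 • W i) := by
  have hW := measurable_vecMul W
  have h0 : (gaussRow (W.updateRow i 0)).prod (gaussianReal 0 1)
      = ((Measure.pi fun _ : ι => gaussianReal 0 1).prod (gaussianReal 0 1)).map
        (Prod.map (fun z => z ᵥ* W.updateRow i 0) id) := by
    rw [← Measure.map_prod_map _ _ (measurable_vecMul _) measurable_id, Measure.map_id]
    rfl
  have h1 := map_update_pi_prod (fun _ : ι => gaussianReal 0 1) i
  rw [h0, Measure.map_map (by fun_prop) ((measurable_vecMul _).prodMap measurable_id), gaussRow]
  conv_lhs => rw [← h1]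
  rw [Measure.map_map hW measurable_update']
  congr 1
  funext p
  ext c
  simp only [Function.comp_apply, vecMul, dotProduct, Prod.map_fst, Prod.map_snd, id_eq, Pi.add_apply,
    Pi.smul_apply, smul_eq_mul]
  rw [← Finset.sum_erase_add _ _ (Finset.mem_univ i),
    ← Finset.sum_erase_add Finset.univ (fun j => p.1 j * (W.updateRow i 0) j c)
      (Finset.mem_univ i)]
  simp only [Function.update_self, updateRow_self, Pi.zero_apply, mul_zero, add_zero]
  congr 1
  refine Finset.sum_congr rfl fun j hj => ?_
  rw [Function.update_of_ne (Finset.ne_of_mem_erase hj),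
    updateRow_ne (Finset.ne_of_mem_erase hj)]

/-- The rows of the Gaussian mixing mechanism are i.i.d. Gaussian row vectors. -/
lemma gaussMix_eq_pi {n d : ℕ} (k : ℕ) (σ : ℝ) (X : Matrix (Fin n) (Fin d) ℝ) :
    gaussMix k σ X
      = Measure.pi fun _ : Fin k => gaussRow (fromRows X (σ • (1 : Matrix (Fin d) (Fin d) ℝ))) := by
  have hrow : gaussRow (fromRows X (σ • (1 : Matrix (Fin d) (Fin d) ℝ)))
      = ((Measure.pi fun _ : Fin n => gaussianReal 0 1).prod
          (Measure.pi fun _ : Fin d => gaussianReal 0 1)).map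
        (fun p j => (∑ l, p.1 l * X l j) + σ * p.2 j) := by
    rw [gaussRow, ← (measurePreserving_sumPiEquivProdPi_symm
      (fun _ : Fin n ⊕ Fin d => gaussianReal 0 1)).map_eq,
      Measure.map_map (measurable_vecMul _) (MeasurableEquiv.measurable _)]
    congr 1
    funext p
    ext j
    simp [vecMul, dotProduct, MeasurableEquiv.coe_sumPiEquivProdPi_symm, Matrix.one_apply,
      mul_comm]
  have hmap : Measurable fun (p : (Fin n → ℝ) × (Fin d → ℝ)) (j : Fin d) =>
      (∑ l, p.1 l * X l j) + σ * p.2 j := by fun_prop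
  have hprob : IsProbabilityMeasure (((Measure.pi fun _ : Fin n => gaussianReal 0 1).prod
      (Measure.pi fun _ : Fin d => gaussianReal 0 1)).map
        (fun p j => (∑ l, p.1 l * X l j) + σ * p.2 j)) :=
    Measure.isProbabilityMeasure_map hmap.aemeasurable
  rw [hrow, ← Measure.pi_map_pi fun _ => hmap.aemeasurable, gaussMix, stdGaussMat, stdGaussMat,
    ← (measurePreserving_arrowProdEquivProdArrow (Fin n → ℝ) (Fin d → ℝ) (Fin k)
      (fun _ => Measure.pi fun _ => gaussianReal 0 1)
      (fun _ => Measure.pi fun _ => gaussianReal 0 1)).map_eq,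
    Measure.map_map (by fun_prop) (MeasurableEquiv.measurable _)]
  rfl

lemma transpose_mul_self_updateRow_zero {ι κ : Type*} [Fintype ι] [DecidableEq ι]
    (W : Matrix ι κ ℝ) (i : ι) :
    Wᵀ * W = (W.updateRow i 0)ᵀ * W.updateRow i 0 + vecMulVec (W i) (W i) := by
  ext p q
  simp only [Matrix.mul_apply, Matrix.add_apply, transpose_apply, vecMulVec_apply]
  rw [← Finset.sum_erase_add _ _ (Finset.mem_univ i),
    ← Finset.sum_erase_add Finset.univ
      (fun j => (W.updateRow i 0) j p * (W.updateRow i 0) j q) (Finset.mem_univ i)]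
  simp only [updateRow_self, Pi.zero_apply, mul_zero, add_zero]
  congr 1
  refine Finset.sum_congr rfl fun j hj => ?_
  simp only [updateRow_ne (Finset.ne_of_mem_erase hj)]

/-- Zeroing out one row of `W` changes the law of the Gaussian row vector by an explicit density,
expressed through the leverage `t` of that row. -/
lemma gaussRow_eq_withDensity {ι : Type*} [Fintype ι] [DecidableEq ι] {d : ℕ}
    (W : Matrix ι (Fin d) ℝ) (i : ι) (w : Fin d → ℝ) (hw : (Wᵀ * W) *ᵥ w = W i)
    {t : ℝ} (ht : t = W i ⬝ᵥ w) (ht1 : t < 1) :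
    ∃ b : Fin d → ℝ,
      (gaussRow (W.updateRow i 0)).map (fun y => b ⬝ᵥ y) = gaussianReal 0 (t / (1 - t)).toNNReal ∧
      gaussRow W = (gaussRow (W.updateRow i 0)).withDensity (fun y =>
        ENNReal.ofReal (√(1 - t) * Real.exp ((1 - t) * (b ⬝ᵥ y) ^ 2 / 2))) := by
  have ht' : 1 - t ≠ 0 := by linarith
  set V := W.updateRow i 0 with hV
  have hVw : (Vᵀ * V) *ᵥ w = (1 - t) • W i := by
    rw [transpose_mul_self_updateRow_zero W i, add_mulVec, vecMulVec_mulVec, ← ht] at hw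
    ext c
    have := congrFun hw c
    simp only [Pi.add_apply, Pi.smul_apply, smul_eq_mul, MulOpposite.smul_eq_mul_unop,
      MulOpposite.unop_op] at this ⊢
    linarith
  have hVb : (Vᵀ * V) *ᵥ ((1 - t)⁻¹ • w) = W i := by
    rw [mulVec_smul, hVw, smul_smul, inv_mul_cancel₀ ht', one_smul]
  have hs : t / (1 - t) = ((1 - t)⁻¹ • w) ⬝ᵥ ((Vᵀ * V) *ᵥ ((1 - t)⁻¹ • w)) := by
    rw [hVb, smul_dotProduct, dotProduct_comm, ← ht, smul_eq_mul, div_eq_inv_mul]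
  refine ⟨(1 - t)⁻¹ • w, ?_, ?_⟩
  · rw [gaussRow_map_dotProduct, ← hs]
  · have h := gaussRow_prod_map_add V _ hs
    rw [hVb] at h
    rw [gaussRow_eq_prod_map W i, h]
    have h1 : 1 + t / (1 - t) = (1 - t)⁻¹ := by field_simp; ring
    congr 1
    funext y
    rw [h1, one_div, inv_inv]
    congr 3
    field_simp

/-- The Rényi divergence between product measures given by a real density. -/
lemma renyiDiv_pi_withDensity {Ω : Type*} [MeasurableSpace Ω] (k : ℕ) (P Q : Measure Ω)
    [IsProbabilityMeasure P] [IsProbabilityMeasure Q] {f : Ω → ℝ} (hf : Measurable f)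
    (hf0 : ∀ y, 0 ≤ f y) (hP : P = Q.withDensity (fun y => ENNReal.ofReal (f y))) (α : ℝ) :
    renyiDiv α (Measure.pi fun _ : Fin k => P) (Measure.pi fun _ : Fin k => Q)
      = (α - 1)⁻¹ * (k * Real.log (∫ y, f y ^ α ∂Q)) := by
  have hsf : SigmaFinite (Q.withDensity (fun y => ENNReal.ofReal (f y))) := by
    rw [← hP]; infer_instance
  have hpi : (Measure.pi fun _ : Fin k => P) = (Measure.pi fun _ : Fin k => Q).withDensity
      (fun z => ∏ r, ENNReal.ofReal (f (z r))) := by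
    rw [hP, pi_withDensity_eq (fun _ : Fin k => Q) _ fun _ => by fun_prop]
  have hrn := Measure.rnDeriv_withDensity (Measure.pi fun _ : Fin k => Q)
    (f := fun z => ∏ r, ENNReal.ofReal (f (z r))) (by fun_prop)
  rw [← hpi] at hrn
  have hint : ∫ z, ((Measure.pi fun _ : Fin k => P).rnDeriv (Measure.pi fun _ => Q) z).toReal ^ α
      ∂(Measure.pi fun _ : Fin k => Q) = (∫ y, f y ^ α ∂Q) ^ k := by
    have hpow := integral_fintype_prod_eq_pow (μ := Q) (ι := Fin k) (fun y => f y ^ α)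
    rw [Fintype.card_fin] at hpow
    rw [← hpow]
    refine integral_congr_ae ?_
    filter_upwards [hrn] with z hz
    rw [hz, ← ENNReal.ofReal_prod_of_nonneg (fun r _ => hf0 _),
      ENNReal.toReal_ofReal (Finset.prod_nonneg fun r _ => hf0 _),
      Real.finsetProd_rpow _ _ (fun r _ => hf0 _)]
  rw [renyiDiv, hint, Real.log_pow]

/-- exact identity for the Rényi divergence between outputs of the
Gaussian mixing mechanism on a dataset and its zero-out neighbor. -/
theorem gaussMix_renyiDiv_eq {n d : ℕ} (X : Matrix (Fin n) (Fin d) ℝ)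
    (σ : ℝ) (hσ : 0 < σ) (k : ℕ) (hk : 1 ≤ k)
    (i : Fin n) (X' : Matrix (Fin n) (Fin d) ℝ) (hX' : X' = X.updateRow i 0)
    (Sig : Matrix (Fin d) (Fin d) ℝ) (hSig : Sig = Xᵀ * X + σ ^ 2 • (1 : Matrix (Fin d) (Fin d) ℝ))
    (t : ℝ) (ht : t = X i ⬝ᵥ (Sig⁻¹ *ᵥ X i))
    (α : ℝ) (hα : 1 < α) (hαt : α * t < 1) :
    renyiDiv α (gaussMix k σ X) (gaussMix k σ X')
      = (k / (2 * (α - 1))) * Real.log ((1 - t) ^ α / (1 - α * t)) := by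
  set W := fromRows X (σ • (1 : Matrix (Fin d) (Fin d) ℝ)) with hW
  have hWW : Wᵀ * W = Sig := by
    rw [hW, transpose_fromRows, fromCols_mul_fromRows, hSig, transpose_smul, transpose_one,
      smul_mul_smul_comm, one_mul, sq]
  have hW' : fromRows X' (σ • (1 : Matrix (Fin d) (Fin d) ℝ)) = W.updateRow (Sum.inl i) 0 := by
    rw [hX', hW]
    ext (j | j) c
    · by_cases hj : j = i
      · subst hj; simp
      · simp [updateRow_ne hj, updateRow_ne (Sum.inl_injective.ne hj)]
    · simp [updateRow_ne]
  have hpd : Sig.PosDef := by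
    rw [hSig]
    refine Matrix.PosDef.posSemidef_add ?_ (PosDef.one.smul (by positivity))
    simpa using posSemidef_conjTranspose_mul_self X
  have hw : (Wᵀ * W) *ᵥ (Sig⁻¹ *ᵥ X i) = W (Sum.inl i) := by
    rw [hWW, mulVec_mulVec, mul_nonsing_inv _ hpd.det_pos.ne'.isUnit, one_mulVec]
    rfl
  have ht0 : 0 ≤ t := by
    rw [ht]
    simpa using hpd.inv.posSemidef.dotProduct_mulVec_nonneg (X i)
  have ht1 : t < 1 := by nlinarith
  have ht1' : 0 < 1 - t := by linarith
  have hαt' : 0 < 1 - α * t := by linarith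
  obtain ⟨b, hb, hdens⟩ := gaussRow_eq_withDensity W (Sum.inl i) _ hw ht ht1
  have hbm := measurable_dotProduct b
  rw [gaussMix_eq_pi, gaussMix_eq_pi, hW', renyiDiv_pi_withDensity k _ _ (by fun_prop)
    (fun y => by positivity) hdens]
  have hint : ∫ y, (√(1 - t) * Real.exp ((1 - t) * (b ⬝ᵥ y) ^ 2 / 2)) ^ α
      ∂(gaussRow (W.updateRow (Sum.inl i) 0)) = √((1 - t) ^ α / (1 - α * t)) := by
    have h (y : Fin d → ℝ) : (√(1 - t) * Real.exp ((1 - t) * (b ⬝ᵥ y) ^ 2 / 2)) ^ α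
        = √((1 - t) ^ α) * Real.exp (α * (1 - t) * (b ⬝ᵥ y) ^ 2 / 2) := by
      rw [Real.mul_rpow (by positivity) (by positivity), ← Real.exp_mul, Real.sqrt_eq_rpow,
        Real.sqrt_eq_rpow, ← Real.rpow_mul ht1'.le, ← Real.rpow_mul ht1'.le]
      congr 2
      · ring
      · ring
    have hv : ((t / (1 - t)).toNNReal : ℝ) = t / (1 - t) :=
      Real.coe_toNNReal _ (by positivity)
    have hβ : α * (1 - t) * ((t / (1 - t)).toNNReal : ℝ) = α * t := by
      rw [hv]; field_simp
    simp only [h]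
    rw [integral_const_mul, ← integral_map (f := fun u => Real.exp (α * (1 - t) * u ^ 2 / 2))
      hbm.aemeasurable (by fun_prop), hb, integral_exp_sq_gaussianReal _ (by rw [hβ]; exact hαt),
      hβ, ← Real.sqrt_mul (by positivity), mul_one_div]
  rw [hint, Real.log_sqrt (by positivity)]
  have : α - 1 ≠ 0 := by linarith
  field_simp
end
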